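/- Let ρ, μ, ν : (0, ∞) → ℝ be continuously differentiable and let ψ : (0, ∞) → ℝ be differentiable with ψ'(w) = (3/2)·w·ρ'(w) for all w > 0. Define on 𝒰 the functions E(f, b, g, q) = ρ(fb) + √(fb)·μ(√(b/f)) + √(gq)·ν(√(q/g)) + 1/(fb + gq) and Q(f, b, g, q) = ψ(fb) + (1/2)(fb)^{3/2}·μ(√(b/f)) + √(gq)·ν(√(q/g))·(fb + gq/2) − (3/2)·ln(fb + gq) − fb/(2(fb + gq)). Then (E, Q) is an entropy/entropy-flux pair for the reduced two-phase thin-film system, i.e. ∇E(U)ᵀ·DF(U) = ∇Q(U)ᵀ for every U ∈ 𝒰, where ∇ denotes the gradient with respect to (f, b, g, q). -/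

import Mathlib

open Matrix

/-- Flux Jacobian of the reduced two-phase thin-film system. -/
noncomputable def fluxJacobian (f b g q : ℝ) : Matrix (Fin 4) (Fin 4) ℝ :=
  !![f*b,   f^2/2, 0,       0;
     b^2/2, f*b,   0,       0;
     g*b,   f*g,   f*b+g*q, g^2/2;
     b*q,   f*q,   q^2/2,   f*b+g*q]

/-- The class of entropies: `E = ρ(fb) + √(fb)·μ(√(b/f)) + √(gq)·ν(√(q/g)) + 1/(fb+gq)`. -/
noncomputable def entropyE (ρ μ ν : ℝ → ℝ) (U : Fin 4 → ℝ) : ℝ :=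
  ρ (U 0 * U 1) + Real.sqrt (U 0 * U 1) * μ (Real.sqrt (U 1 / U 0))
    + Real.sqrt (U 2 * U 3) * ν (Real.sqrt (U 3 / U 2))
    + 1 / (U 0 * U 1 + U 2 * U 3)

/-- The associated entropy fluxes:
`Q = ψ(fb) + (1/2)(fb)^{3/2}·μ(√(b/f)) + √(gq)·ν(√(q/g))·(fb + gq/2)
      − (3/2)·ln(fb + gq) − fb/(2(fb + gq))`. -/
noncomputable def entropyFluxQ (ψ μ ν : ℝ → ℝ) (U : Fin 4 → ℝ) : ℝ :=
  ψ (U 0 * U 1)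
    + (1/2) * ((U 0 * U 1) * Real.sqrt (U 0 * U 1)) * μ (Real.sqrt (U 1 / U 0))
    + Real.sqrt (U 2 * U 3) * ν (Real.sqrt (U 3 / U 2))
        * (U 0 * U 1 + U 2 * U 3 / 2)
    - (3/2) * Real.log (U 0 * U 1 + U 2 * U 3)
    - (U 0 * U 1) / (2 * (U 0 * U 1 + U 2 * U 3))

/-!
Entropy pairs form a vector space, and `(E, Q)` is a sum of four of them, each of which is seen
in the coordinates `w = fb`, `r = b/f`, `z = gq`, `t = q/g`. There the flux derivative `A` acts
on differentials almost diagonally: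
`dw ∘ A = (3w/2) dw`, `dr ∘ A = (w/2) dr`, `dt ∘ A = (w + z/2) dt`,
`dz ∘ A = 2z dw + (w + 3z/2) dz`.
So `w`, `r`, `t` are Riemann invariants, and `ρ(w)` is an entropy with flux `ψ(w)`. The relation
for `dz` says that `√z` is an entropy with flux `√z (w + z/2)`; this flux is `√z` times the speed
of `t`, so multiplying both by a function of `t` gives another entropy pair. The pair built on
`√w` and `r` is the same one with nothing below the film, that is, with `w` replaced by `0`.
For `1/(w + z)` the displayed relations make `d(1/(w + z)) ∘ A` a closed form in `w` and `z`,
with potential `-(3/2) ln(w + z) - w/(2(w + z))`.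
-/

section EntropyPair

variable {V : Type*} [NormedAddCommGroup V] [NormedSpace ℝ V]

/-- `η` is an entropy with entropy flux `q` at `u`, for a system whose flux has derivative `A`
at `u`: both are differentiable there and `dη ∘ A = dq`. -/
def IsEntropyPairAt (A : V →L[ℝ] V) (η q : V → ℝ) (u : V) : Prop :=
  ∃ η' : V →L[ℝ] ℝ, HasFDerivAt η η' u ∧ HasFDerivAt q (η' ∘L A) u

/-- `r` is a Riemann invariant at `u` of speed `c`, for a system whose flux has derivative `A`
at `u`: its differential is a left eigenvector of `A` with eigenvalue `c`. A vanishing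
differential is allowed. -/
def IsRiemannInvariantAt (A : V →L[ℝ] V) (c : ℝ) (r : V → ℝ) (u : V) : Prop :=
  ∃ r' : V →L[ℝ] ℝ, HasFDerivAt r r' u ∧ r' ∘L A = c • r'

variable {A : V →L[ℝ] V} {u : V} {c : ℝ}

theorem IsEntropyPairAt.fderiv_comp {η q : V → ℝ} (h : IsEntropyPairAt A η q u) :
    fderiv ℝ η u ∘L A = fderiv ℝ q u := by
  obtain ⟨η', hη, hq⟩ := h
  rw [hη.fderiv, hq.fderiv]

theorem IsEntropyPairAt.add {η₁ q₁ η₂ q₂ : V → ℝ} (h₁ : IsEntropyPairAt A η₁ q₁ u)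
    (h₂ : IsEntropyPairAt A η₂ q₂ u) : IsEntropyPairAt A (η₁ + η₂) (q₁ + q₂) u := by
  obtain ⟨η₁', hη₁, hq₁⟩ := h₁
  obtain ⟨η₂', hη₂, hq₂⟩ := h₂
  exact ⟨η₁' + η₂', hη₁.add hη₂, by simpa only [ContinuousLinearMap.add_comp] using hq₁.add hq₂⟩

theorem IsRiemannInvariantAt.comp {r : V → ℝ} {φ : ℝ → ℝ} (hr : IsRiemannInvariantAt A c r u)
    (hφ : DifferentiableAt ℝ φ (r u)) : IsRiemannInvariantAt A c (φ ∘ r) u := by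
  obtain ⟨r', hr', hrA⟩ := hr
  refine ⟨deriv φ (r u) • r', hφ.hasDerivAt.comp_hasFDerivAt u hr', ?_⟩
  rw [ContinuousLinearMap.smul_comp, hrA, smul_comm]

theorem IsRiemannInvariantAt.comp_sqrt {r : V → ℝ} {φ : ℝ → ℝ}
    (hr : IsRiemannInvariantAt A c r u) (hr_pos : 0 < r u) (hφ : DifferentiableAt ℝ φ √(r u)) :
    IsRiemannInvariantAt A c (fun v ↦ φ √(r v)) u :=
  (hr.comp (Real.hasDerivAt_sqrt hr_pos.ne').differentiableAt).comp hφ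

theorem IsRiemannInvariantAt.isEntropyPairAt_comp {r : V → ℝ} {ρ ψ : ℝ → ℝ} {ρ' : ℝ}
    (hr : IsRiemannInvariantAt A c r u) (hρ : HasDerivAt ρ ρ' (r u))
    (hψ : HasDerivAt ψ (c * ρ') (r u)) : IsEntropyPairAt A (ρ ∘ r) (ψ ∘ r) u := by
  obtain ⟨r', hr', hrA⟩ := hr
  refine ⟨ρ' • r', hρ.comp_hasFDerivAt u hr', (hψ.comp_hasFDerivAt u hr').congr_fderiv ?_⟩
  rw [ContinuousLinearMap.smul_comp, hrA, smul_smul, mul_comm]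

theorem IsEntropyPairAt.mul_isRiemannInvariantAt {η q n : V → ℝ} (h : IsEntropyPairAt A η q u)
    (hn : IsRiemannInvariantAt A c n u) (hq : q u = c * η u) :
    IsEntropyPairAt A (η * n) (q * n) u := by
  obtain ⟨η', hη', hq'⟩ := h
  obtain ⟨n', hn', hnA⟩ := hn
  refine ⟨_, hη'.mul hn', (hq'.mul hn').congr_fderiv ?_⟩
  rw [ContinuousLinearMap.add_comp, ContinuousLinearMap.smul_comp, ContinuousLinearMap.smul_comp,
    hnA, hq, smul_smul, mul_comm c]

variable {w z : V → ℝ} {w' z' : V →L[ℝ] ℝ}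

theorem isEntropyPairAt_sqrt (hw : HasFDerivAt w w' u) (hz : HasFDerivAt z z' u)
    (hzA : z' ∘L A = (2 * z u) • w' + (w u + 3 / 2 * z u) • z') (hz_pos : 0 < z u) :
    IsEntropyPairAt A (fun v ↦ √(z v)) (fun v ↦ √(z v) * (w v + 1 / 2 * z v)) u := by
  have hsqrt := hz.sqrt hz_pos.ne'
  refine ⟨_, hsqrt, (hsqrt.fun_mul (hw.fun_add (hz.const_mul (1 / 2)))).congr_fderiv ?_⟩
  rw [ContinuousLinearMap.smul_comp, hzA]
  ext v
  simp only [_root_.smul_apply, _root_.add_apply, smul_eq_mul]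
  field_simp
  rw [Real.sq_sqrt hz_pos.le]
  ring

theorem isEntropyPairAt_sqrt_mul_comp_sqrt {r : V → ℝ} {φ : ℝ → ℝ} (hw : HasFDerivAt w w' u)
    (hz : HasFDerivAt z z' u)
    (hzA : z' ∘L A = (2 * z u) • w' + (w u + 3 / 2 * z u) • z') (hz_pos : 0 < z u)
    (hr : IsRiemannInvariantAt A (w u + 1 / 2 * z u) r u) (hr_pos : 0 < r u)
    (hφ : DifferentiableAt ℝ φ √(r u)) :
    IsEntropyPairAt A (fun v ↦ √(z v) * φ √(r v))
      (fun v ↦ √(z v) * (w v + 1 / 2 * z v) * φ √(r v)) u :=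
  (isEntropyPairAt_sqrt hw hz hzA hz_pos).mul_isRiemannInvariantAt (hr.comp_sqrt hr_pos hφ)
    (mul_comm _ _)

theorem isEntropyPairAt_inv_add (hw : HasFDerivAt w w' u) (hz : HasFDerivAt z z' u)
    (hwA : w' ∘L A = (3 / 2 * w u) • w')
    (hzA : z' ∘L A = (2 * z u) • w' + (w u + 3 / 2 * z u) • z') (hwz : w u + z u ≠ 0) :
    IsEntropyPairAt A (fun v ↦ (w v + z v)⁻¹)
      (fun v ↦ -(3 / 2) * Real.log (w v + z v) - 1 / 2 * (w v * (w v + z v)⁻¹)) u := by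
  have hadd := hw.fun_add hz
  have hinv : HasFDerivAt (fun v ↦ (w v + z v)⁻¹) _ u :=
    (hasDerivAt_inv hwz).comp_hasFDerivAt u hadd
  refine ⟨_, hinv, (((hadd.log hwz).const_mul _).fun_sub
    ((hw.fun_mul hinv).const_mul _)).congr_fderiv ?_⟩
  rw [ContinuousLinearMap.smul_comp, ContinuousLinearMap.add_comp, hwA, hzA]
  ext v
  simp only [_root_.smul_apply, _root_.add_apply, _root_.sub_apply, smul_eq_mul]
  field_simp
  ring

end EntropyPair

section Coordinates

variable {n : ℕ}

/-- The differential at `U` of the product `V i * V j` of two coordinates. -/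
def coordMulDeriv (i j : Fin n) (U : Fin n → ℝ) : (Fin n → ℝ) →L[ℝ] ℝ :=
  U i • ContinuousLinearMap.proj j + U j • ContinuousLinearMap.proj i

/-- The differential at `U` of the quotient `V i / V j` of two coordinates, for `U j ≠ 0`. -/
noncomputable def coordDivDeriv (i j : Fin n) (U : Fin n → ℝ) : (Fin n → ℝ) →L[ℝ] ℝ :=
  (U j)⁻¹ • ContinuousLinearMap.proj i - (U i / U j ^ 2) • ContinuousLinearMap.proj j

theorem coordMulDeriv_apply (i j : Fin n) (U v : Fin n → ℝ) :
    coordMulDeriv i j U v = U i * v j + U j * v i := rfl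

theorem coordDivDeriv_apply (i j : Fin n) (U v : Fin n → ℝ) :
    coordDivDeriv i j U v = (U j)⁻¹ * v i - U i / U j ^ 2 * v j := rfl

theorem hasFDerivAt_coord_mul (i j : Fin n) (U : Fin n → ℝ) :
    HasFDerivAt (fun V : Fin n → ℝ ↦ V i * V j) (coordMulDeriv i j U) U :=
  (hasFDerivAt_apply i U).fun_mul (hasFDerivAt_apply j U)

theorem hasFDerivAt_coord_div (i : Fin n) {j : Fin n} {U : Fin n → ℝ} (hj : U j ≠ 0) :
    HasFDerivAt (fun V : Fin n → ℝ ↦ V i / V j) (coordDivDeriv i j U) U := by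
  have hinv : HasFDerivAt (fun V : Fin n → ℝ ↦ (V j)⁻¹) _ U :=
    (hasDerivAt_inv hj).comp_hasFDerivAt U (hasFDerivAt_apply (𝕜 := ℝ) j U)
  simp only [div_eq_mul_inv]
  refine ((hasFDerivAt_apply i U).fun_mul hinv).congr_fderiv ?_
  ext v
  simp only [coordDivDeriv_apply, _root_.add_apply, _root_.smul_apply,
    ContinuousLinearMap.proj_apply, smul_eq_mul]
  ring

end Coordinates

section ThinFilm

/-- The derivative `DF(U)` of the flux of the reduced two-phase thin-film system, that is,
`fluxJacobian` as a continuous linear map acting on column vectors. -/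
noncomputable def fluxDeriv (U : Fin 4 → ℝ) : (Fin 4 → ℝ) →L[ℝ] (Fin 4 → ℝ) :=
  (fluxJacobian (U 0) (U 1) (U 2) (U 3)).mulVecLin.toContinuousLinearMap

theorem fluxDeriv_single (U : Fin 4 → ℝ) (j : Fin 4) :
    fluxDeriv U (Pi.single j 1) = (fluxJacobian (U 0) (U 1) (U 2) (U 3))ᵀ j :=
  mulVec_single_one (fluxJacobian (U 0) (U 1) (U 2) (U 3)) j

theorem fluxDeriv_apply (U v : Fin 4 → ℝ) :
    fluxDeriv U v =
      ![U 0 * U 1 * v 0 + U 0 ^ 2 / 2 * v 1,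
        U 1 ^ 2 / 2 * v 0 + U 0 * U 1 * v 1,
        U 2 * U 1 * v 0 + U 0 * U 2 * v 1 + (U 0 * U 1 + U 2 * U 3) * v 2 + U 2 ^ 2 / 2 * v 3,
        U 1 * U 3 * v 0 + U 0 * U 3 * v 1 + U 3 ^ 2 / 2 * v 2 + (U 0 * U 1 + U 2 * U 3) * v 3] := by
  ext i
  fin_cases i <;> simp [fluxDeriv, fluxJacobian, mulVec, dotProduct, Fin.sum_univ_four]

theorem coordMulDeriv_zero_one_comp_fluxDeriv (U : Fin 4 → ℝ) :
    coordMulDeriv 0 1 U ∘L fluxDeriv U = (3 / 2 * (U 0 * U 1)) • coordMulDeriv 0 1 U := by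
  ext v
  simp only [ContinuousLinearMap.comp_apply, _root_.smul_apply, smul_eq_mul, coordMulDeriv_apply,
    fluxDeriv_apply, cons_val]
  ring

theorem coordMulDeriv_two_three_comp_fluxDeriv (U : Fin 4 → ℝ) :
    coordMulDeriv 2 3 U ∘L fluxDeriv U =
      (2 * (U 2 * U 3)) • coordMulDeriv 0 1 U +
        (U 0 * U 1 + 3 / 2 * (U 2 * U 3)) • coordMulDeriv 2 3 U := by
  ext v
  simp only [ContinuousLinearMap.comp_apply, _root_.add_apply, _root_.smul_apply, smul_eq_mul,
    coordMulDeriv_apply, fluxDeriv_apply, cons_val]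
  ring

variable {U : Fin 4 → ℝ}

theorem isRiemannInvariantAt_one_div_zero (hf : U 0 ≠ 0) :
    IsRiemannInvariantAt (fluxDeriv U) (1 / 2 * (U 0 * U 1)) (fun V ↦ V 1 / V 0) U := by
  refine ⟨_, hasFDerivAt_coord_div 1 hf, ?_⟩
  ext v
  simp only [ContinuousLinearMap.comp_apply, _root_.smul_apply, smul_eq_mul, coordDivDeriv_apply,
    fluxDeriv_apply, cons_val]
  field_simp
  ring

theorem isRiemannInvariantAt_three_div_two (hg : U 2 ≠ 0) :
    IsRiemannInvariantAt (fluxDeriv U) (U 0 * U 1 + 1 / 2 * (U 2 * U 3))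
      (fun V ↦ V 3 / V 2) U := by
  refine ⟨_, hasFDerivAt_coord_div 3 hg, ?_⟩
  ext v
  simp only [ContinuousLinearMap.comp_apply, _root_.smul_apply, smul_eq_mul, coordDivDeriv_apply,
    fluxDeriv_apply, cons_val]
  field_simp
  ring

theorem isEntropyPairAt_lowerFilm {μ : ℝ → ℝ} (hfb : 0 < U 0 * U 1)
    (hμ : DifferentiableAt ℝ μ √(U 1 / U 0)) :
    IsEntropyPairAt (fluxDeriv U) (fun V ↦ √(V 0 * V 1) * μ √(V 1 / V 0))
      (fun V ↦ √(V 0 * V 1) * (1 / 2 * (V 0 * V 1)) * μ √(V 1 / V 0)) U := by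
  have hratio_pos : 0 < U 1 / U 0 := div_pos_iff.2 (mul_pos_iff.1 (mul_comm (U 0) _ ▸ hfb))
  have hratio := isRiemannInvariantAt_one_div_zero (left_ne_zero_of_mul hfb.ne')
  simpa only [zero_add] using
    isEntropyPairAt_sqrt_mul_comp_sqrt (hasFDerivAt_const 0 U) (hasFDerivAt_coord_mul 0 1 U)
      (by simpa using coordMulDeriv_zero_one_comp_fluxDeriv U) hfb (by simpa using hratio)
      hratio_pos hμ

theorem isEntropyPairAt_upperFilm {ν : ℝ → ℝ} (hgq : 0 < U 2 * U 3)
    (hν : DifferentiableAt ℝ ν √(U 3 / U 2)) :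
    IsEntropyPairAt (fluxDeriv U) (fun V ↦ √(V 2 * V 3) * ν √(V 3 / V 2))
      (fun V ↦ √(V 2 * V 3) * (V 0 * V 1 + 1 / 2 * (V 2 * V 3)) * ν √(V 3 / V 2)) U := by
  have hratio_pos : 0 < U 3 / U 2 := div_pos_iff.2 (mul_pos_iff.1 (mul_comm (U 2) _ ▸ hgq))
  have hratio := isRiemannInvariantAt_three_div_two (left_ne_zero_of_mul hgq.ne')
  exact isEntropyPairAt_sqrt_mul_comp_sqrt (hasFDerivAt_coord_mul 0 1 U)
    (hasFDerivAt_coord_mul 2 3 U) (coordMulDeriv_two_three_comp_fluxDeriv U) hgq hratio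
    hratio_pos hν

theorem entropy_entropyFlux_pair_general {ρ μ ν ψ : ℝ → ℝ} {ρ' : ℝ}
    (hfb : 0 < U 0 * U 1) (hgq : 0 < U 2 * U 3) (hρ : HasDerivAt ρ ρ' (U 0 * U 1))
    (hψ : HasDerivAt ψ (3 / 2 * (U 0 * U 1) * ρ') (U 0 * U 1))
    (hμ : DifferentiableAt ℝ μ √(U 1 / U 0)) (hν : DifferentiableAt ℝ ν √(U 3 / U 2)) :
    IsEntropyPairAt (fluxDeriv U) (entropyE ρ μ ν) (entropyFluxQ ψ μ ν) U := by
  have hw := hasFDerivAt_coord_mul 0 1 U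
  have hwA := coordMulDeriv_zero_one_comp_fluxDeriv U
  have hρψ := IsRiemannInvariantAt.isEntropyPairAt_comp ⟨_, hw, hwA⟩ hρ hψ
  have hinv := isEntropyPairAt_inv_add hw (hasFDerivAt_coord_mul 2 3 U) hwA
    (coordMulDeriv_two_three_comp_fluxDeriv U) (add_pos hfb hgq).ne'
  convert ((hρψ.add (isEntropyPairAt_lowerFilm hfb hμ)).add
    (isEntropyPairAt_upperFilm hgq hν)).add hinv using 1
  · ext V
    simp [entropyE]
  · ext V
    simp only [entropyFluxQ, Pi.add_apply, Function.comp_apply, div_eq_mul_inv, mul_inv]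
    ring

end ThinFilm

/-- For any `C¹` functions `ρ, μ, ν` on `(0,∞)` and `ψ` with
`ψ' (w) = (3/2)·w·ρ'(w)`, the pair `(E, Q)` is an entropy/entropy-flux pair
for the reduced system, i.e. `∇E(U)ᵀ·DF(U) = ∇Q(U)ᵀ` on `𝒰` (componentwise:
`dE(U)` applied to the `j`-th column of `DF(U)` equals `∂Q/∂Uⱼ`). -/
theorem entropy_entropyFlux_pair (ρ μ ν ψ : ℝ → ℝ)
    (hρ : ContDiffOn ℝ 1 ρ (Set.Ioi 0))
    (hμ : ContDiffOn ℝ 1 μ (Set.Ioi 0))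
    (hν : ContDiffOn ℝ 1 ν (Set.Ioi 0))
    (hψ : ∀ w : ℝ, 0 < w → HasDerivAt ψ ((3/2) * w * deriv ρ w) w) :
    ∀ U : Fin 4 → ℝ,
      0 < U 0 → 0 < U 1 → 0 < U 2 → 0 < U 3 → U 0 * U 1 < U 2 * U 3 →
      ∀ j : Fin 4,
        fderiv ℝ (entropyE ρ μ ν) U ((fluxJacobian (U 0) (U 1) (U 2) (U 3))ᵀ j)
          = fderiv ℝ (entropyFluxQ ψ μ ν) U (Pi.single j 1) := by
  intro U hf hb hg hq _ j
  have differentiableAt_of_pos {φ : ℝ → ℝ} (hφ : ContDiffOn ℝ 1 φ (Set.Ioi 0)) {x : ℝ}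
      (hx : 0 < x) : DifferentiableAt ℝ φ x :=
    (hφ.differentiableOn one_ne_zero).differentiableAt (Ioi_mem_nhds hx)
  have hfb : 0 < U 0 * U 1 := mul_pos hf hb
  have hpair : IsEntropyPairAt (fluxDeriv U) (entropyE ρ μ ν) (entropyFluxQ ψ μ ν) U :=
    entropy_entropyFlux_pair_general hfb (mul_pos hg hq)
      (differentiableAt_of_pos hρ hfb).hasDerivAt (hψ _ hfb)
      (differentiableAt_of_pos hμ (Real.sqrt_pos.2 (div_pos hb hf)))
      (differentiableAt_of_pos hν (Real.sqrt_pos.2 (div_pos hq hg)))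
  rw [← fluxDeriv_single, ← hpair.fderiv_comp, ContinuousLinearMap.comp_apply]
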